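/- Let k be a field of characteristic ≠ 2, (W, B_W) a finite-dimensional vector space over k with a nondegenerate symmetric bilinear form, and let V = kp ⊕ kq ⊕ W carry the symmetric bilinear form B extending B_W with B(p,p) = B(q,q) = 0, B(p,q) = 1, and p, q orthogonal to W. Then for all t, t' ∈ W and R, R' ∈ SO(W): (i) h(t,R) preserves B and has determinant 1, i.e. h(t,R) ∈ SO(V); (ii) h(t,R) p = p; (iii) h(t,R) ∘ h(t',R') = h(t + Rt', RR'). -/

import Mathlib

namespace ConformalModel

variable {k W : Type*} [Field k] [AddCommGroup W] [Module k W]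

/-- The bilinear form on `V = kp ⊕ kq ⊕ W`, realized as `k × k × W` with `p = (1,0,0)` and
`q = (0,1,0)`: `B((a,b,w),(a',b',w')) = a b' + b a' + B_W(w,w')`. -/
def Bext (BW : LinearMap.BilinForm k W) : LinearMap.BilinForm k (k × k × W) :=
  LinearMap.mk₂ k (fun x y => x.1 * y.2.1 + x.2.1 * y.1 + BW x.2.2 y.2.2)
    (by intro m₁ m₂ n; simp; ring)
    (by intro c m n; simp; ring)
    (by intro m n₁ n₂; simp; ring)
    (by intro c m n; simp; ring)

/-- The distinguished null vector `p`. -/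
def pVec : k × k × W := (1, 0, 0)

/-- The linear map `h(t,R)` of `V = kp ⊕ kq ⊕ W`, determined by `h(t,R)p = p`,
`h(t,R)q = −(B(t,t)/2)p + q + t`, `h(t,R)w = −B(t,Rw)p + Rw`. -/
def hMap (BW : LinearMap.BilinForm k W) (t : W) (R : W →ₗ[k] W) :
    (k × k × W) →ₗ[k] (k × k × W) where
  toFun x := (x.1 - x.2.1 * (BW t t / 2) - BW t (R x.2.2), x.2.1, x.2.1 • t + R x.2.2)
  map_add' x y := by
    refine Prod.ext ?_ (Prod.ext ?_ ?_)
    · simp; ring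
    · simp
    · simp [add_smul]; abel
  map_smul' c x := by
    refine Prod.ext ?_ (Prod.ext ?_ ?_)
    · simp; ring
    · simp
    · simp [mul_smul, smul_add]

/-- The dilation `c̃` with `c̃ p = c p`, `c̃ q = c⁻¹ q`, `c̃ w = w`. -/
def cTilde (c : k) : (k × k × W) →ₗ[k] (k × k × W) where
  toFun x := (c * x.1, c⁻¹ * x.2.1, x.2.2)
  map_add' x y := by
    refine Prod.ext ?_ (Prod.ext ?_ ?_) <;> simp <;> ring
  map_smul' r x := by
    refine Prod.ext ?_ (Prod.ext ?_ ?_) <;> simp <;> ring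

/-- The section `J₀ : W → V`, `J₀(w) = −(B(w,w)/2)p + q + w`. -/
def J0 (BW : LinearMap.BilinForm k W) (w : W) : k × k × W := (-(BW w w / 2), 1, w)

/-- Membership in the special orthogonal group of a bilinear form, for a linear
endomorphism: it is bijective, preserves the form, and has determinant 1. -/
def IsSO {V : Type*} [AddCommGroup V] [Module k V] (B : LinearMap.BilinForm k V)
    (g : V →ₗ[k] V) : Prop :=
  Function.Bijective g ∧ (∀ x y, B (g x) (g y) = B x y) ∧ LinearMap.det g = 1

theorem det_transvection_eq_one {S V : Type*} [CommRing S] [AddCommGroup V] [Module S V]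
    {f : Module.Dual S V} {v : V} (hfv : f v = 0) :
    LinearMap.det (LinearMap.transvection f v) = 1 := by
  rw [← LinearEquiv.transvection.coe_toLinearMap hfv, ← LinearEquiv.coe_det,
    LinearEquiv.transvection.det_eq_one, Units.val_one]

section

variable (BW : LinearMap.BilinForm k W) (t : W) (R : W →ₗ[k] W)

@[simp]
theorem Bext_apply (x y : k × k × W) :
    Bext BW x y = x.1 * y.2.1 + x.2.1 * y.1 + BW x.2.2 y.2.2 :=
  rfl

@[simp]
theorem hMap_apply (x : k × k × W) :
    hMap BW t R x =
      (x.1 - x.2.1 * (BW t t / 2) - BW t (R x.2.2), x.2.1, x.2.1 • t + R x.2.2) :=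
  rfl

theorem hMap_pVec : hMap BW t R pVec = pVec := by
  simp [pVec]

theorem hMap_eq_hMap_id_comp_prodMap :
    hMap BW t R = hMap BW t .id ∘ₗ LinearMap.prodMap .id (LinearMap.prodMap .id R) :=
  rfl

/-- The linear form `B(p, ·)` on `V`, written as the coordinate along `q`; it directs the
transvection that moves `q` in `hMap_id_eq_transvection_comp`. -/
def qCoord : Module.Dual k (k × k × W) :=
  LinearMap.fst k k W ∘ₗ LinearMap.snd k k (k × W)

/-- The linear form `B(t, ·)` on `V` for `t ∈ W`; it directs the transvection that moves `W`
in `hMap_id_eq_transvection_comp`. -/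
def wForm : Module.Dual k (k × k × W) :=
  BW t ∘ₗ LinearMap.snd k k W ∘ₗ LinearMap.snd k k (k × W)

theorem qCoord_mk_zero (a : k) : qCoord (a, 0, t) = 0 :=
  rfl

theorem neg_wForm_pVec : (-wForm BW t) pVec = 0 := by
  simp [wForm, pVec]

theorem transvection_qCoord_apply (a b c : k) (w : W) :
    LinearMap.transvection qCoord (c, 0, t) (a, b, w) = (a + b * c, b, w + b • t) := by
  simp [LinearMap.transvection.apply, qCoord]

theorem transvection_neg_wForm_apply (a b : k) (w : W) :
    LinearMap.transvection (-wForm BW t) pVec (a, b, w) = (a - BW t w, b, w) := by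
  simp [LinearMap.transvection.apply, wForm, pVec, sub_eq_add_neg]

theorem hMap_id_eq_transvection_comp :
    hMap BW t .id =
      LinearMap.transvection qCoord (-(BW t t / 2), 0, t) ∘ₗ
        LinearMap.transvection (-wForm BW t) pVec := by
  refine LinearMap.ext fun ⟨a, b, w⟩ => ?_
  rw [LinearMap.comp_apply, transvection_neg_wForm_apply, transvection_qCoord_apply]
  refine Prod.ext ?_ (Prod.ext rfl (add_comm _ _))
  simp only [hMap_apply, LinearMap.id_apply]
  ring

theorem hMap_id_bijective : Function.Bijective (hMap BW t .id) := by
  rw [hMap_id_eq_transvection_comp]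
  exact (LinearEquiv.transvection (qCoord_mk_zero t _)).bijective.comp
    (LinearEquiv.transvection (neg_wForm_pVec BW t)).bijective

theorem det_hMap_id : LinearMap.det (hMap BW t .id) = 1 := by
  rw [hMap_id_eq_transvection_comp, LinearMap.det_comp,
    det_transvection_eq_one (qCoord_mk_zero t _),
    det_transvection_eq_one (neg_wForm_pVec BW t), one_mul]

theorem det_hMap [FiniteDimensional k W] :
    LinearMap.det (hMap BW t R) = LinearMap.det R := by
  rw [hMap_eq_hMap_id_comp_prodMap, LinearMap.det_comp, det_hMap_id, LinearMap.det_prodMap,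
    LinearMap.det_prodMap, LinearMap.det_id, one_mul, one_mul, one_mul]

end

section

variable {BW : LinearMap.BilinForm k W} {R : W →ₗ[k] W}

theorem hMap_bijective (hR : Function.Bijective R) (t : W) :
    Function.Bijective (hMap BW t R) := by
  rw [hMap_eq_hMap_id_comp_prodMap]
  exact (hMap_id_bijective BW t).comp
    (Function.bijective_id.prodMap (Function.bijective_id.prodMap hR))

theorem Bext_hMap_hMap (h2 : (2 : k) ≠ 0) (hsymm : BW.IsSymm)
    (hR : ∀ x y, BW (R x) (R y) = BW x y) (t : W) (x y : k × k × W) :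
    Bext BW (hMap BW t R x) (hMap BW t R y) = Bext BW x y := by
  have hhalf : 2 * (BW t t / 2) = BW t t := mul_div_cancel₀ _ h2
  simp only [Bext_apply, hMap_apply, map_add, map_smul, LinearMap.add_apply,
    LinearMap.smul_apply, smul_eq_mul, hR, hsymm.eq (R x.2.2) t]
  linear_combination (-x.2.1 * y.2.1) * hhalf

theorem hMap_comp_hMap (h2 : (2 : k) ≠ 0) (hsymm : BW.IsSymm)
    (hR : ∀ x y, BW (R x) (R y) = BW x y) (t t' : W) (R' : W →ₗ[k] W) :
    hMap BW t R ∘ₗ hMap BW t' R' = hMap BW (t + R t') (R ∘ₗ R') := by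
  refine LinearMap.ext fun ⟨a, b, w⟩ => Prod.ext ?_ (Prod.ext rfl ?_)
  · have hhalf : BW (t + R t') (t + R t') / 2 = BW t t / 2 + BW t (R t') + BW t' t' / 2 := by
      simp only [map_add, LinearMap.add_apply, hR, hsymm.eq (R t') t]
      field_simp
      ring
    simp only [LinearMap.comp_apply, hMap_apply, hhalf]
    simp only [map_add, map_smul, LinearMap.add_apply, smul_eq_mul, hR]
    ring
  · simp [add_assoc]

theorem IsSO.hMap [FiniteDimensional k W] (h2 : (2 : k) ≠ 0) (hsymm : BW.IsSymm)
    (hR : IsSO BW R) (t : W) : IsSO (Bext BW) (hMap BW t R) := by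
  obtain ⟨hbij, hpres, hdet⟩ := hR
  exact ⟨hMap_bijective hbij t, Bext_hMap_hMap h2 hsymm hpres t, by rw [det_hMap, hdet]⟩

theorem stmt_10_general [FiniteDimensional k W] (h2 : (2 : k) ≠ 0) (hsymm : BW.IsSymm)
    (hR : IsSO BW R) (t t' : W) (R' : W →ₗ[k] W) :
    IsSO (Bext BW) (hMap BW t R) ∧
      hMap BW t R pVec = pVec ∧
      hMap BW t R ∘ₗ hMap BW t' R' = hMap BW (t + R t') (R ∘ₗ R') :=
  ⟨hR.hMap h2 hsymm t, hMap_pVec BW t R, hMap_comp_hMap h2 hsymm hR.2.1 t t' R'⟩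

end

/-- For all `t, t' ∈ W` and `R, R' ∈ SO(W)`: (i) `h(t,R) ∈ SO(V)` where `V = kp ⊕ kq ⊕ W`;
(ii) `h(t,R) p = p`; (iii) `h(t,R) ∘ h(t',R') = h(t + Rt', RR')`. -/
theorem stmt_10 {k W : Type*} [Field k] [AddCommGroup W] [Module k W]
    [FiniteDimensional k W] (hchar : (2 : k) ≠ 0)
    (BW : LinearMap.BilinForm k W)
    (hsymm : ∀ x y, BW x y = BW y x)
    (hnd : ∀ x, (∀ y, BW x y = 0) → x = 0) :
    ∀ (t t' : W) (R R' : W →ₗ[k] W), IsSO BW R → IsSO BW R' →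
      IsSO (Bext BW) (hMap BW t R) ∧
      hMap BW t R pVec = pVec ∧
      (hMap BW t R) ∘ₗ (hMap BW t' R') = hMap BW (t + R t') (R ∘ₗ R') := by
  intro t t' R R' hR _
  exact stmt_10_general hchar ⟨hsymm⟩ hR t t' R'

end ConformalModel
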